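/- Let d ∈ {1,2,3}, let κ ∈ S^{d-1}, and let φ ∈ C¹(S^{d-1}; ℝ) be supported in the half-sphere {q ∈ S^{d-1} : q·κ ≥ 0}. Then the oscillatory integrals A^N_φ := (2πi)^{-(d-1)/2} ∫_{S^{d-1}} N^{(d-1)/2} e^{i(1 − q·κ)N} φ(q) dS(q) converge to φ(κ) as N → ∞. -/

import Mathlib

open MeasureTheory Real Filter Metric
open scoped RealInnerProductSpace Topology

noncomputable section

/-!
In polar coordinates about `κ`, a point of the sphere at angle `α` from `κ` has phase
`1 - q·κ = 1 - cos α`, so the integral over the sphere becomes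
`∫₀^β exp (iN(1 - cos α)) (sin α)^(d-2) ψ(α) dα`, where the `C¹` function `ψ` is the integral of `φ`
over the directions of the parallel at angle `α`; at `α = 0` it equals `|S^{d-2}| φ(κ)`.

For `d = 2` write `1 - cos α = w² / 2` with `w = 2 sin (α / 2)`. Integrating by parts against the
primitive of `exp (iN w² / 2)`, a rescaled Fresnel integral, and passing to the limit by dominated
convergence leaves the complete Fresnel integral `√(2πi) / 2` times `ψ(0) = 2 φ(κ)`.

For `d = 3` the factor `sin α dα` is the differential of the phase. One integration by parts leaves
the boundary term `i ψ(0) = 2πi φ(κ)`, and the remaining integral tends to `0` by the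
Riemann–Lebesgue lemma.

For `d = 1` the sphere is `{κ, -κ}` and `φ(-κ) = 0`.
-/

open Complex (I)
open Set (Icc Ioc Ioo Ioi Iio Ici)

section Fresnel

theorem integral_line_eq_sub {P f : ℂ → ℂ} (hP : ∀ z, HasDerivAt P (f z) z) (hf : Continuous f)
    (z w : ℂ) (R : ℝ) :
    ∫ t in (0 : ℝ)..R, f (z + t * w) * w = P (z + R * w) - P z := by
  have hderiv (t : ℝ) : HasDerivAt (fun t : ℝ ↦ P (z + t * w)) (f (z + t * w) * w) t := by
    have hline : HasDerivAt (fun t : ℂ ↦ z + t * w) w t := by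
      simpa using ((hasDerivAt_id (t : ℂ)).mul_const w).const_add z
    exact ((hP _).comp (t : ℂ) hline).comp_ofReal
  rw [intervalIntegral.integral_eq_sub_of_hasDerivAt (fun t _ ↦ hderiv t)
    (Continuous.intervalIntegrable (by fun_prop) _ _)]
  simp

theorem integral_triangle_eq {f : ℂ → ℂ} (hf : Differentiable ℂ f) (R : ℝ) :
    ∫ t in (0 : ℝ)..R, f t =
      (∫ t in (0 : ℝ)..R, f (t * (1 + I)) * (1 + I)) - ∫ t in (0 : ℝ)..R, f (R + t * I) * I := by
  obtain ⟨P, hP⟩ := hf.isExactOn_univ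
  have hline := integral_line_eq_sub (fun z ↦ hP z trivial) hf.continuous
  have horizontal := hline 0 1 R
  have diagonal := hline 0 (1 + I) R
  have vertical := hline R I R
  simp only [zero_add, mul_one] at horizontal diagonal
  rw [horizontal, diagonal, vertical, mul_add, mul_one]
  ring

/-- The Fresnel integral `∫₀ˣ exp (i t² / 2) dt`, the primitive of the model oscillation at a
nondegenerate stationary point. -/
def fresnelIntegral (x : ℝ) : ℂ :=
  ∫ t in (0 : ℝ)..x, Complex.exp (I * ((t : ℂ) ^ 2 / 2))

theorem hasDerivAt_fresnelIntegral (x : ℝ) :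
    HasDerivAt fresnelIntegral (Complex.exp (I * ((x : ℂ) ^ 2 / 2))) x :=
  (Continuous.integral_hasStrictDerivAt (by fun_prop) 0 x).hasDerivAt

theorem continuous_fresnelIntegral : Continuous fresnelIntegral :=
  continuous_iff_continuousAt.2 fun x ↦ (hasDerivAt_fresnelIntegral x).continuousAt

theorem integral_exp_neg_mul_le_inv {c : ℝ} (hc : 0 < c) (x : ℝ) :
    ∫ t in (0 : ℝ)..x, rexp (-c * t) ≤ c⁻¹ := by
  rw [intervalIntegral.integral_comp_mul_left (fun t ↦ rexp t) (neg_ne_zero.2 hc.ne'), integral_exp]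
  have : 0 < c⁻¹ * rexp (-c * x) := by positivity
  simp only [mul_zero, exp_zero, smul_eq_mul, inv_neg]
  linarith

theorem norm_integral_fresnel_vertical_le {R : ℝ} (hR : 0 < R) :
    ‖∫ t in (0 : ℝ)..R, Complex.exp (I * (((R : ℂ) + t * I) ^ 2 / 2)) * I‖ ≤ R⁻¹ := by
  have hnorm (t : ℝ) : ‖Complex.exp (I * (((R : ℂ) + t * I) ^ 2 / 2)) * I‖ = rexp (-R * t) := by
    have hre : (I * (((R : ℂ) + t * I) ^ 2 / 2)).re = -R * t := by
      rw [show I * (((R : ℂ) + t * I) ^ 2 / 2) =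
          ((-R * t : ℝ) : ℂ) + (((R ^ 2 - t ^ 2) / 2 : ℝ) : ℂ) * I by
        push_cast
        linear_combination (R * t + t ^ 2 * I / 2) * Complex.I_sq]
      rw [Complex.add_re, Complex.re_ofReal_mul, Complex.I_re, mul_zero, add_zero,
        Complex.ofReal_re]
    rw [norm_mul, Complex.norm_I, mul_one, Complex.norm_exp, hre]
  calc ‖∫ t in (0 : ℝ)..R, Complex.exp (I * (((R : ℂ) + t * I) ^ 2 / 2)) * I‖
      ≤ ∫ t in (0 : ℝ)..R, ‖Complex.exp (I * (((R : ℂ) + t * I) ^ 2 / 2)) * I‖ :=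
        intervalIntegral.norm_integral_le_integral_norm hR.le
    _ = ∫ t in (0 : ℝ)..R, rexp (-R * t) := by simp only [hnorm]
    _ ≤ R⁻¹ := integral_exp_neg_mul_le_inv hR R

theorem integral_fresnel_diagonal (R : ℝ) :
    ∫ t in (0 : ℝ)..R, Complex.exp (I * (((t : ℂ) * (1 + I)) ^ 2 / 2)) * (1 + I) =
      (1 + I) * ((∫ t in (0 : ℝ)..R, rexp (-1 * t ^ 2) : ℝ) : ℂ) := by
  have hexp (t : ℝ) : I * (((t : ℂ) * (1 + I)) ^ 2 / 2) = ((-1 * t ^ 2 : ℝ) : ℂ) := by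
    push_cast
    linear_combination ((t : ℂ) ^ 2 * (1 + I / 2)) * Complex.I_sq
  rw [← intervalIntegral.integral_ofReal, ← intervalIntegral.integral_const_mul]
  simp only [hexp, Complex.ofReal_exp, mul_comm (1 + I)]

/-- The value `∫₀^∞ exp (i t² / 2) dt = √(2πi) / 2` of the complete Fresnel integral. -/
def fresnelLimit : ℂ :=
  (1 + I) * ((√π / 2 : ℝ) : ℂ)

theorem tendsto_fresnelIntegral_atTop : Tendsto fresnelIntegral atTop (𝓝 fresnelLimit) := by
  have gaussian : Tendsto (fun R : ℝ ↦ ∫ t in (0 : ℝ)..R, rexp (-1 * t ^ 2)) atTop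
      (𝓝 (√π / 2)) := by
    simpa only [integral_gaussian_Ioi, div_one, id] using
      intervalIntegral_tendsto_integral_Ioi 0
        (integrable_exp_neg_mul_sq one_pos).integrableOn tendsto_id
  have diagonal : Tendsto (fun R : ℝ ↦ ∫ t in (0 : ℝ)..R,
      Complex.exp (I * (((t : ℂ) * (1 + I)) ^ 2 / 2)) * (1 + I)) atTop (𝓝 fresnelLimit) := by
    simp only [integral_fresnel_diagonal]
    exact ((Complex.continuous_ofReal.tendsto _).comp gaussian).const_mul (1 + I)
  have vertical : Tendsto (fun R : ℝ ↦ ∫ t in (0 : ℝ)..R,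
      Complex.exp (I * (((R : ℂ) + t * I) ^ 2 / 2)) * I) atTop (𝓝 0) :=
    squeeze_zero_norm' ((eventually_gt_atTop 0).mono fun R ↦ norm_integral_fresnel_vertical_le)
      tendsto_inv_atTop_zero
  rw [← sub_zero fresnelLimit]
  exact (diagonal.sub vertical).congr fun R ↦
    (integral_triangle_eq (f := fun z ↦ Complex.exp (I * (z ^ 2 / 2))) (by fun_prop) R).symm

theorem exists_norm_le_of_tendsto_atTop {E : Type*} [SeminormedAddCommGroup E] {f : ℝ → E} {a : ℝ}
    {l : E} (hf : ContinuousOn f (Ici a)) (hlim : Tendsto f atTop (𝓝 l)) :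
    ∃ C, ∀ x, a ≤ x → ‖f x‖ ≤ C := by
  obtain ⟨M, hM⟩ := eventually_atTop.1 (hlim.norm.eventually_le_const (lt_add_one ‖l‖))
  obtain ⟨C, hC⟩ := isCompact_Icc.exists_bound_of_continuousOn
    (hf.mono (Set.Icc_subset_Ici_self : Icc a M ⊆ Ici a))
  refine ⟨max C (‖l‖ + 1), fun x hx ↦ ?_⟩
  rcases le_total x M with hxM | hMx
  · exact (hC x ⟨hx, hxM⟩).trans (le_max_left _ _)
  · exact (hM x hMx).trans (le_max_right _ _)

end Fresnel

section OscillatoryIntegrals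

open scoped FourierTransform

theorem continuousAt_deriv_of_contDiffAt {E : Type*} [NormedAddCommGroup E] [NormedSpace ℝ E]
    {f : ℝ → E} {x : ℝ} (hf : ContDiffAt ℝ 1 f x) : ContinuousAt (deriv f) x := by
  rw [show deriv f = fun y ↦ fderiv ℝ f y 1 from funext fun _ ↦ fderiv_apply_one_eq_deriv.symm]
  exact (hf.continuousAt_fderiv one_ne_zero).clm_apply continuousAt_const

variable {a b : ℝ} {u : ℝ → ℂ}

theorem tendsto_integral_mul_deriv_of_tendsto_const {ι : Type*} {l : Filter ι}
    [l.IsCountablyGenerated] {v v' : ι → ℝ → ℂ} {C : ℝ} {L : ℂ} (hab : a < b)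
    (hu : ∀ x ∈ Icc a b, ContDiffAt ℝ 1 u x)
    (hv : ∀ i, ∀ x ∈ Icc a b, HasDerivAt (v i) (v' i x) x)
    (hv' : ∀ i, IntervalIntegrable (v' i) volume a b) (hva : ∀ i, v i a = 0)
    (hbound : ∀ᶠ i in l, ∀ x ∈ Ioc a b, ‖v i x‖ ≤ C)
    (hlim : ∀ x ∈ Ioc a b, Tendsto (v · x) l (𝓝 L)) :
    Tendsto (fun i ↦ ∫ x in a..b, u x * v' i x) l (𝓝 (L * u a)) := by
  have hIcc : Set.uIcc a b = Icc a b := Set.uIcc_of_le hab.le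
  have hIoc : Set.uIoc a b = Ioc a b := Set.uIoc_of_le hab.le
  have hderiv : ∀ x ∈ Set.uIcc a b, HasDerivAt u (deriv u x) x := fun x hx ↦
    ((hu x (hIcc ▸ hx)).differentiableAt one_ne_zero).hasDerivAt
  have hcont : ContinuousOn (deriv u) (Icc a b) := fun x hx ↦
    (continuousAt_deriv_of_contDiffAt (hu x hx)).continuousWithinAt
  have hint : IntervalIntegrable (deriv u) volume a b :=
    ContinuousOn.intervalIntegrable (hIcc ▸ hcont)
  have hparts (i : ι) : ∫ x in a..b, u x * v' i x =
      u b * v i b - ∫ x in a..b, deriv u x * v i x := by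
    rw [intervalIntegral.integral_mul_deriv_eq_deriv_mul hderiv
      (fun x hx ↦ hv i x (hIcc ▸ hx)) hint (hv' i), hva, mul_zero, sub_zero]
  have hdominated : Tendsto (fun i ↦ ∫ x in a..b, deriv u x * v i x) l
      (𝓝 (∫ x in a..b, deriv u x * L)) := by
    refine intervalIntegral.tendsto_integral_filter_of_dominated_convergence
      (fun x ↦ ‖deriv u x‖ * C) (.of_forall fun i ↦ ?_)
      (hbound.mono fun i hi ↦ .of_forall ?_) (hint.norm.mul_const C)
      (.of_forall ?_) <;> rw [hIoc]
    · exact ((hcont.mul fun x hx ↦ (hv i x hx).continuousAt.continuousWithinAt).mono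
        Set.Ioc_subset_Icc_self).aestronglyMeasurable measurableSet_Ioc
    · intro x hx
      rw [norm_mul]
      exact mul_le_mul_of_nonneg_left (hi x hx) (norm_nonneg _)
    · exact fun x hx ↦ (hlim x hx).const_mul _
  have hvalue : L * u a = u b * L - ∫ x in a..b, deriv u x * L := by
    rw [intervalIntegral.integral_mul_const,
      intervalIntegral.integral_eq_sub_of_hasDerivAt hderiv hint]
    ring
  simp only [hparts, hvalue]
  exact ((hlim b ⟨hab, le_rfl⟩).const_mul (u b)).sub hdominated

theorem tendsto_integral_mul_deriv_fresnelIntegral {w w' : ℝ → ℝ} (hab : a < b)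
    (hu : ∀ x ∈ Icc a b, ContDiffAt ℝ 1 u x) (hw : ∀ x ∈ Icc a b, HasDerivAt w (w' x) x)
    (hw' : ContinuousOn w' (Icc a b)) (hwa : w a = 0) (hpos : ∀ x ∈ Ioc a b, 0 < w x) :
    Tendsto (fun t : ℝ ↦ ∫ x in a..b,
        u x * (((t * w' x : ℝ) : ℂ) * Complex.exp (I * (((t * w x : ℝ) : ℂ) ^ 2 / 2))))
      atTop (𝓝 (fresnelLimit * u a)) := by
  obtain ⟨C, hC⟩ := exists_norm_le_of_tendsto_atTop (a := 0)
    continuous_fresnelIntegral.continuousOn tendsto_fresnelIntegral_atTop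
  refine tendsto_integral_mul_deriv_of_tendsto_const (v := fun t x ↦ fresnelIntegral (t * w x))
    (C := C) hab hu (fun t x hx ↦ ?_) (fun t ↦ ?_) ?_ ?_ fun x hx ↦ ?_
  · refine ((hasDerivAt_fresnelIntegral (t * w x)).scomp x ((hw x hx).const_mul t)).congr_deriv ?_
    rw [Complex.real_smul]
  · refine ContinuousOn.intervalIntegrable ?_
    rw [Set.uIcc_of_le hab.le]
    have hwcont : ContinuousOn w (Icc a b) := fun x hx ↦ (hw x hx).continuousAt.continuousWithinAt
    fun_prop
  · simp [hwa, fresnelIntegral]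
  · filter_upwards [eventually_ge_atTop 0] with t ht x hx
    exact hC _ (mul_nonneg ht (hpos x hx).le)
  · exact tendsto_fresnelIntegral_atTop.comp (tendsto_id.atTop_mul_const (hpos x hx))

theorem one_sub_cos_eq (θ : ℝ) : 1 - cos θ = (2 * sin (θ / 2)) ^ 2 / 2 := by
  have := cos_sq' (θ / 2)
  rw [cos_sq, mul_div_cancel₀ _ two_ne_zero] at this
  linarith

theorem tendsto_sqrt_mul_integral_cexp_one_sub_cos {β : ℝ} (hβ : β ∈ Ioo 0 π) {ψ : ℝ → ℂ}
    (hψ : ContDiff ℝ 1 ψ) :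
    Tendsto (fun N : ℝ ↦ ((√N : ℝ) : ℂ) *
        ∫ θ in (0 : ℝ)..β, Complex.exp (I * ((1 - cos θ : ℝ) : ℂ) * N) * ψ θ)
      atTop (𝓝 (fresnelLimit * ψ 0)) := by
  have hcos : ∀ θ ∈ Icc 0 β, 0 < cos (θ / 2) := fun θ hθ ↦
    cos_pos_of_mem_Ioo ⟨by linarith [hθ.1, pi_pos], by linarith [hθ.2, hβ.2]⟩
  have hmodel := tendsto_integral_mul_deriv_fresnelIntegral (a := 0) (b := β)
    (u := fun θ ↦ (cos (θ / 2))⁻¹ • ψ θ) (w := fun θ ↦ 2 * sin (θ / 2))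
    (w' := fun θ ↦ cos (θ / 2)) hβ.1 ?_ ?_ ?_ ?_ ?_
  · have hlim := hmodel.comp tendsto_sqrt_atTop
    simp only [zero_div, cos_zero, inv_one, one_smul] at hlim
    refine hlim.congr' ?_
    filter_upwards [eventually_ge_atTop 0] with N hN
    rw [Function.comp_apply, ← intervalIntegral.integral_const_mul]
    refine intervalIntegral.integral_congr fun θ hθ ↦ ?_
    have hne : ((cos (θ / 2) : ℝ) : ℂ) ≠ 0 :=
      Complex.ofReal_ne_zero.2 (hcos θ (Set.uIcc_of_le hβ.1.le ▸ hθ)).ne'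
    have hphase : I * (((√N * (2 * sin (θ / 2)) : ℝ) : ℂ) ^ 2 / 2) =
        I * ((1 - cos θ : ℝ) : ℂ) * N := by
      rw [one_sub_cos_eq, mul_assoc]
      norm_cast
      rw [mul_pow, sq_sqrt hN]
      ring_nf
    rw [hphase, Complex.real_smul, Complex.ofReal_inv, Complex.ofReal_mul]
    field_simp
  · intro θ hθ
    have hcosHalf : ContDiffAt ℝ 1 (fun θ ↦ cos (θ / 2)) θ := by fun_prop
    exact (hcosHalf.inv (hcos θ hθ).ne').smul hψ.contDiffAt
  · intro θ _
    refine (((hasDerivAt_id θ).div_const 2).sin.const_mul 2).congr_deriv ?_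
    simp only [id]
    ring
  · fun_prop
  · simp
  · exact fun θ hθ ↦ mul_pos two_pos
      (sin_pos_of_pos_of_lt_pi (by linarith [hθ.1]) (by linarith [hθ.1, hθ.2, hβ.2]))

theorem tendsto_setIntegral_cexp_mul_cocompact {s : Set ℝ} (hs : MeasurableSet s) {p p' : ℝ → ℝ}
    (hp : ∀ x ∈ s, HasDerivWithinAt p (p' x) s x) (hinj : Set.InjOn p s)
    (hne : ∀ x ∈ s, p' x ≠ 0) (h : ℝ → ℂ) :
    Tendsto (fun N : ℝ ↦ ∫ x in s, Complex.exp (I * p x * N) * h x) (cocompact ℝ) (𝓝 0) := by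
  -- Substituting `y = p x` turns the integral into the Fourier transform of `f`.
  let g := Function.invFunOn p s
  have hg : ∀ x ∈ s, g (p x) = x := fun x hx ↦ hinj.leftInvOn_invFunOn hx
  have himage : MeasurableSet (p '' s) :=
    hs.image_of_continuousOn_injOn (fun x hx ↦ (hp x hx).continuousWithinAt) hinj
  let f : ℝ → ℂ := (p '' s).indicator fun y ↦ |p' (g y)|⁻¹ • h (g y)
  have hscale : Tendsto (fun N : ℝ ↦ N * (-(2 * π)⁻¹)) (cocompact ℝ) (cocompact ℝ) :=
    (Homeomorph.mulRight₀ (-(2 * π)⁻¹) (by simp [pi_ne_zero])).isClosedEmbedding.tendsto_cocompact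
  refine ((Real.tendsto_integral_exp_smul_cocompact f).comp hscale).congr fun N ↦ ?_
  have hindicator (v w : ℝ) : 𝐞 (-(v * w)) • f v =
      (p '' s).indicator (fun v ↦ 𝐞 (-(v * w)) • |p' (g v)|⁻¹ • h (g v)) v := by
    by_cases hv : v ∈ p '' s <;> simp [f, hv]
  simp only [Function.comp_apply, hindicator]
  rw [integral_indicator himage, integral_image_eq_integral_abs_deriv_smul hs hp hinj]
  refine setIntegral_congr_fun hs fun x hx ↦ ?_
  have hphase : ((2 * π * -(p x * (N * -(2 * π)⁻¹)) : ℝ) : ℂ) * I = I * p x * N := by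
    have : (π : ℂ) ≠ 0 := Complex.ofReal_ne_zero.2 pi_ne_zero
    push_cast
    field_simp
  rw [smul_comm, smul_smul _ _ (h _), hg x hx, mul_inv_cancel₀ (abs_ne_zero.2 (hne x hx)), one_smul,
    Circle.smul_def, Real.fourierChar_apply, hphase, smul_eq_mul]

theorem mul_integral_cexp_mul_deriv {p p' : ℝ → ℝ} (hab : a < b)
    (hu : ∀ x ∈ Icc a b, ContDiffAt ℝ 1 u x) (hub : u b = 0)
    (hp : ∀ x ∈ Icc a b, HasDerivAt p (p' x) x) (hp' : ContinuousOn p' (Icc a b)) (hpa : p a = 0)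
    (N : ℝ) :
    (N : ℂ) * ∫ x in a..b, Complex.exp (I * p x * N) * (p' x * u x) =
      I * (u a + ∫ x in Ioo a b, Complex.exp (I * p x * N) * deriv u x) := by
  have hIcc : Set.uIcc a b = Icc a b := Set.uIcc_of_le hab.le
  have hcont : ContinuousOn p (Icc a b) := fun x hx ↦ (hp x hx).continuousAt.continuousWithinAt
  have hderiv : ∀ x ∈ Set.uIcc a b, HasDerivAt u (deriv u x) x := fun x hx ↦
    ((hu x (hIcc ▸ hx)).differentiableAt one_ne_zero).hasDerivAt
  have hint : IntervalIntegrable (deriv u) volume a b := by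
    refine ContinuousOn.intervalIntegrable fun x hx ↦ ?_
    exact (continuousAt_deriv_of_contDiffAt (hu x (hIcc ▸ hx))).continuousWithinAt
  have hexp : ∀ x ∈ Set.uIcc a b, HasDerivAt (fun x ↦ -I * Complex.exp (I * p x * N))
      (N * (Complex.exp (I * p x * N) * p' x)) x := fun x hx ↦ by
    refine ((((hp x (hIcc ▸ hx)).ofReal_comp.const_mul I).mul_const
      (N : ℂ)).cexp.const_mul (-I)).congr_deriv ?_
    linear_combination (-(N * Complex.exp (I * p x * N) * p' x)) * Complex.I_sq
  have hparts := intervalIntegral.integral_mul_deriv_eq_deriv_mul hderiv hexp hint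
    (ContinuousOn.intervalIntegrable (by rw [hIcc]; fun_prop))
  rw [← integral_Ioc_eq_integral_Ioo, ← intervalIntegral.integral_of_le hab.le]
  calc (N : ℂ) * ∫ x in a..b, Complex.exp (I * p x * N) * (p' x * u x)
      = ∫ x in a..b, u x * (N * (Complex.exp (I * p x * N) * p' x)) := by
        rw [← intervalIntegral.integral_const_mul]
        congr with x
        ring
    _ = I * u a - ∫ x in a..b, -I * (Complex.exp (I * p x * N) * deriv u x) := by
        rw [hparts, hub, hpa]
        congr 1
        · simp [mul_comm]
        · congr with x
          ring
    _ = I * (u a + ∫ x in a..b, Complex.exp (I * p x * N) * deriv u x) := by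
        rw [intervalIntegral.integral_const_mul]
        ring

theorem tendsto_mul_integral_cexp_mul_deriv {p p' : ℝ → ℝ} (hab : a < b)
    (hu : ∀ x ∈ Icc a b, ContDiffAt ℝ 1 u x) (hub : u b = 0)
    (hp : ∀ x ∈ Icc a b, HasDerivAt p (p' x) x) (hp' : ContinuousOn p' (Icc a b)) (hpa : p a = 0)
    (hpos : ∀ x ∈ Ioo a b, 0 < p' x) :
    Tendsto (fun N : ℝ ↦ (N : ℂ) * ∫ x in a..b, Complex.exp (I * p x * N) * (p' x * u x))
      atTop (𝓝 (I * u a)) := by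
  have hderiv : ∀ x ∈ Ioo a b, HasDerivAt p (p' x) x := fun x hx ↦
    hp x (Set.Ioo_subset_Icc_self hx)
  have hmono : StrictMonoOn p (Ioo a b) :=
    strictMonoOn_of_deriv_pos (convex_Ioo a b)
      (fun x hx ↦ (hderiv x hx).continuousAt.continuousWithinAt) fun x hx ↦ by
        rw [interior_Ioo] at hx
        exact (hderiv x hx).deriv ▸ hpos x hx
  have hnonstationary := (tendsto_setIntegral_cexp_mul_cocompact measurableSet_Ioo
    (fun x hx ↦ (hderiv x hx).hasDerivWithinAt) hmono.injOn
    (fun x hx ↦ (hpos x hx).ne') (deriv u)).mono_left atTop_le_cocompact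
  simp only [mul_integral_cexp_mul_deriv hab hu hub hp hp' hpa]
  simpa using (hnonstationary.const_add (u a)).const_mul I

theorem tendsto_mul_integral_cexp_one_sub_cos_mul_sin {β : ℝ} (hβ : β ∈ Ioo 0 π) {ψ : ℝ → ℂ}
    (hψ : ContDiff ℝ 1 ψ) (hψβ : ψ β = 0) :
    Tendsto (fun N : ℝ ↦ (N : ℂ) *
        ∫ θ in (0 : ℝ)..β, Complex.exp (I * ((1 - cos θ : ℝ) : ℂ) * N) * ((sin θ : ℝ) * ψ θ))
      atTop (𝓝 (I * ψ 0)) :=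
  tendsto_mul_integral_cexp_mul_deriv (p := fun θ ↦ 1 - cos θ) hβ.1
    (fun _ _ ↦ hψ.contDiffAt) hψβ (fun θ _ ↦ by simpa using (hasDerivAt_cos θ).const_sub 1)
    continuous_sin.continuousOn (by simp)
    fun _ hθ ↦ sin_pos_of_pos_of_lt_pi hθ.1 (hθ.2.trans hβ.2)

end OscillatoryIntegrals
section SphereMeasure

open Module (finrank)
open scoped ENNReal

theorem lintegral_volumeIoiPow (n : ℕ) {f : ℝ → ℝ≥0∞} (hf : Measurable f) :
    ∫⁻ r, f r ∂Measure.volumeIoiPow n = ∫⁻ r in Ioi (0 : ℝ), ENNReal.ofReal (r ^ n) * f r := by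
  rw [Measure.volumeIoiPow, lintegral_withDensity_eq_lintegral_mul _ (by fun_prop) (by fun_prop),
    ← lintegral_subtype_comap measurableSet_Ioi]
  rfl

theorem lintegral_Ioi_ofReal_pow_mul_indicator_Iio_one (n : ℕ) :
    ∫⁻ r in Ioi (0 : ℝ), ENNReal.ofReal (r ^ n) * (Iio (1 : ℝ)).indicator 1 r =
      ENNReal.ofReal (1 / (n + 1)) := by
  have hball : ∀ r : Ioi (0 : ℝ), (Iio (1 : ℝ)).indicator (1 : ℝ → ℝ≥0∞) r =
      (Iio (⟨1, Set.mem_Ioi.2 one_pos⟩ : Ioi (0 : ℝ))).indicator 1 r := fun r ↦ rfl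
  rw [← lintegral_volumeIoiPow n (measurable_one.indicator measurableSet_Iio)]
  simp only [hball]
  rw [lintegral_indicator_one measurableSet_Iio, Measure.volumeIoiPow_apply_Iio, one_pow]

section Normed

variable {E : Type*} [NormedAddCommGroup E] [NormedSpace ℝ E]

theorem lintegral_Ioi_ofReal_pow_mul_indicator_ball_cone (n : ℕ) (t : Set E)
    (ω : sphere (0 : E) 1) :
    ∫⁻ r in Ioi (0 : ℝ), ENNReal.ofReal (r ^ n) * ((ball 0 1).indicator 1 (r • (ω : E)) *
        t.indicator 1 (‖r • (ω : E)‖⁻¹ • r • (ω : E))) =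
      ENNReal.ofReal (1 / (n + 1)) * t.indicator 1 (ω : E) := by
  rw [← lintegral_Ioi_ofReal_pow_mul_indicator_Iio_one,
    ← lintegral_mul_const' _ _ (by by_cases h : (ω : E) ∈ t <;> simp [h])]
  refine setLIntegral_congr_fun measurableSet_Ioi fun r (hr : 0 < r) ↦ ?_
  have hdirection : ‖r • (ω : E)‖⁻¹ • r • (ω : E) = ω := by
    simp [norm_smul, abs_of_pos hr, inv_smul_smul₀ hr.ne']
  have hball : (ball 0 1).indicator (1 : E → ℝ≥0∞) (r • (ω : E)) =
      (Iio (1 : ℝ)).indicator 1 r := by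
    simp [Set.indicator, norm_smul, abs_of_pos hr]
  simp only [hdirection, hball, mul_assoc]

variable [FiniteDimensional ℝ E] [MeasurableSpace E] [BorelSpace E] [Nontrivial E]
  (μ : Measure E) [μ.IsAddHaarMeasure]

theorem lintegral_eq_lintegral_toSphere {f : E → ℝ≥0∞} (hf : Measurable f) :
    ∫⁻ x, f x ∂μ = ∫⁻ ω, ∫⁻ r in Ioi (0 : ℝ),
      ENNReal.ofReal (r ^ (finrank ℝ E - 1)) * f (r • (ω : E)) ∂volume ∂μ.toSphere := by
  calc ∫⁻ x, f x ∂μ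
      = ∫⁻ x : ({0}ᶜ : Set E), f x ∂(μ.comap (↑)) := by
        rw [lintegral_subtype_comap (measurableSet_singleton _).compl, restrict_compl_singleton]
    _ = ∫⁻ p : sphere (0 : E) 1 × Ioi (0 : ℝ), f ((p.2 : ℝ) • (p.1 : E))
          ∂(μ.toSphere.prod (.volumeIoiPow (finrank ℝ E - 1))) := by
        rw [← μ.measurePreserving_homeomorphUnitSphereProd.lintegral_comp_emb
          (Homeomorph.measurableEmbedding _)]
        refine lintegral_congr fun x ↦ ?_
        simp [smul_inv_smul₀ (norm_ne_zero_iff.2 x.2)]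
    _ = ∫⁻ ω, ∫⁻ r in Ioi (0 : ℝ),
          ENNReal.ofReal (r ^ (finrank ℝ E - 1)) * f (r • (ω : E)) ∂volume ∂μ.toSphere := by
        rw [lintegral_prod _ (by fun_prop)]
        exact lintegral_congr fun ω ↦
          lintegral_volumeIoiPow _ (f := fun r ↦ f (r • (ω : E))) (by fun_prop)

theorem eq_toSphere_of_lintegral_eq {ν : Measure (sphere (0 : E) 1)}
    (hν : ∀ f : E → ℝ≥0∞, Measurable f → ∫⁻ x, f x ∂μ = ∫⁻ ω, ∫⁻ r in Ioi (0 : ℝ),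
      ENNReal.ofReal (r ^ (finrank ℝ E - 1)) * f (r • (ω : E)) ∂volume ∂ν) :
    ν = μ.toSphere := by
  ext s ⟨t, ht, hst⟩
  subst hst
  -- Test the hypothesis on the intersection of the cone over `t` with the unit ball.
  let f : E → ℝ≥0∞ := fun x ↦ (ball 0 1).indicator 1 x * t.indicator 1 (‖x‖⁻¹ • x)
  have hf : Measurable f := (measurable_one.indicator measurableSet_ball).mul
    ((measurable_one.indicator ht).comp (by fun_prop))
  have hms : MeasurableSet (Subtype.val ⁻¹' t : Set (sphere (0 : E) 1)) :=
    measurable_subtype_coe ht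
  have hindicator (ω : sphere (0 : E) 1) : t.indicator (1 : E → ℝ≥0∞) ω =
      (Subtype.val ⁻¹' t).indicator 1 ω := rfl
  have hint := (hν f hf).symm.trans (lintegral_eq_lintegral_toSphere μ hf)
  simp only [f, lintegral_Ioi_ofReal_pow_mul_indicator_ball_cone, hindicator] at hint
  rwa [lintegral_const_mul _ (measurable_one.indicator hms),
    lintegral_const_mul _ (measurable_one.indicator hms), lintegral_indicator_one hms,
    lintegral_indicator_one hms,
    ENNReal.mul_right_inj (by positivity) ENNReal.ofReal_ne_top] at hint

end Normed

theorem lintegral_halfPlane_eq_lintegral_polar {g : ℝ × ℝ → ℝ≥0∞} (hg : Measurable g) :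
    ∫⁻ x, ∫⁻ ρ in Ioi (0 : ℝ), g (x, ρ) =
      ∫⁻ r in Ioi (0 : ℝ), ∫⁻ α in Ioo 0 π, ENNReal.ofReal r * g (r * cos α, r * sin α) := by
  let h : ℝ × ℝ → ℝ≥0∞ := fun p ↦ (Ioi (0 : ℝ)).indicator (fun ρ ↦ g (p.1, ρ)) p.2
  have hh : Measurable h := by
    have : h = {p : ℝ × ℝ | 0 < p.2}.indicator g := rfl
    exact this ▸ hg.indicator (measurableSet_lt measurable_const measurable_snd)
  have hangle (r : ℝ) (hr : 0 < r) :
      ∫⁻ α in Ioo (-π) π, ENNReal.ofReal r * h (r * cos α, r * sin α) =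
        ∫⁻ α in Ioo 0 π, ENNReal.ofReal r * g (r * cos α, r * sin α) := by
    have hinter : Ioi 0 ∩ Ioo (-π) π = Ioo 0 π := by
      rw [← Set.Ioi_inter_Iio, ← Set.Ioi_inter_Iio, ← Set.inter_assoc,
        Set.inter_eq_left.2 (Set.Ioi_subset_Ioi (neg_lt_zero.2 pi_pos).le)]
    rw [← hinter, ← setLIntegral_indicator measurableSet_Ioi]
    refine setLIntegral_congr_fun measurableSet_Ioo fun α hα ↦ ?_
    rcases le_or_gt α 0 with hα0 | hα0
    · have hsin : r * sin α ≤ 0 :=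
        mul_nonpos_of_nonneg_of_nonpos hr.le (sin_nonpos_of_nonpos_of_neg_pi_le hα0 hα.1.le)
      simp [h, hα0.not_gt, hsin.not_gt]
    · have hsin : 0 < r * sin α := mul_pos hr (sin_pos_of_pos_of_lt_pi hα0 hα.2)
      simp [h, hα0, hsin]
  calc ∫⁻ x, ∫⁻ ρ in Ioi (0 : ℝ), g (x, ρ)
      = ∫⁻ p, h p := by
        simp only [Measure.volume_eq_prod, lintegral_prod _ hh.aemeasurable, h,
          lintegral_indicator measurableSet_Ioi]
    _ = ∫⁻ r in Ioi (0 : ℝ), ∫⁻ α in Ioo (-π) π,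
          ENNReal.ofReal r * h (r * cos α, r * sin α) := by
        rw [← lintegral_comp_polarCoord_symm, polarCoord_target, Measure.volume_eq_prod,
          ← Measure.prod_restrict, lintegral_prod _ (by fun_prop)]
        rfl
    _ = _ := setLIntegral_congr_fun measurableSet_Ioi hangle

section PolarCoordinates

variable {E F : Type*} [NormedAddCommGroup E] [InnerProductSpace ℝ E]
  [NormedAddCommGroup F] [InnerProductSpace ℝ F]

theorem finrank_withLp_real_prod [FiniteDimensional ℝ F] :
    finrank ℝ (WithLp 2 (ℝ × F)) = finrank ℝ F + 1 := by
  rw [(WithLp.linearEquiv 2 ℝ (ℝ × F)).finrank_eq, Module.finrank_prod, Module.finrank_self,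
    add_comm]

theorem exists_linearIsometryEquiv_prod_apply_eq [FiniteDimensional ℝ E] [FiniteDimensional ℝ F]
    (h : finrank ℝ E = finrank ℝ F + 1) (κ : sphere (0 : E) 1) :
    ∃ e : WithLp 2 (ℝ × F) ≃ₗᵢ[ℝ] E, e (WithLp.toLp 2 (1, 0)) = κ := by
  have hfinrank : finrank ℝ (WithLp 2 (ℝ × F)) = finrank ℝ E :=
    finrank_withLp_real_prod.trans h.symm
  let e₀ := (stdOrthonormalBasis ℝ (WithLp 2 (ℝ × F))).equiv (stdOrthonormalBasis ℝ E)
    (finCongr hfinrank)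
  have hnorm : ‖e₀ (WithLp.toLp 2 (1, 0))‖ = ‖(κ : E)‖ := by simp
  exact ⟨e₀.trans (ℝ ∙ (e₀ (WithLp.toLp 2 (1, 0)) - κ))ᗮ.reflection,
    Submodule.reflection_sub hnorm⟩

variable (e : WithLp 2 (ℝ × F) ≃ₗᵢ[ℝ] E)

/-- The point of the unit sphere of `E = ℝ ⊕ F` at polar angle `p.1` from the pole `(1, 0)`, in the
direction of the unit vector `p.2` of the equatorial hyperplane `F`. -/
def spherePolarPoint (p : ℝ × sphere (0 : F) 1) : sphere (0 : E) 1 :=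
  ⟨e (WithLp.toLp 2 (cos p.1, sin p.1 • (p.2 : F))), by
    simp [WithLp.prod_norm_eq_of_L2, norm_smul]⟩

theorem continuous_spherePolarPoint : Continuous (spherePolarPoint e) := by
  unfold spherePolarPoint
  fun_prop

theorem inner_spherePolarPoint (p : ℝ × sphere (0 : F) 1) :
    ⟪(spherePolarPoint e p : E), e (WithLp.toLp 2 (1, 0))⟫ = cos p.1 := by
  simp [spherePolarPoint]

variable [FiniteDimensional ℝ E] [MeasurableSpace E] [BorelSpace E]
  [FiniteDimensional ℝ F] [MeasurableSpace F] [BorelSpace F] [Nontrivial F]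

theorem lintegral_eq_lintegral_smul_spherePolarPoint {f : E → ℝ≥0∞} (hf : Measurable f) :
    ∫⁻ x, f x = ∫⁻ ω, ∫⁻ r in Ioi (0 : ℝ), ∫⁻ α in Ioo 0 π,
      ENNReal.ofReal r * (ENNReal.ofReal ((r * sin α) ^ (finrank ℝ F - 1)) *
        f (r • (spherePolarPoint e (α, ω) : E)))
      ∂volume ∂volume ∂(volume : Measure F).toSphere := by
  have hpoint (r α : ℝ) (ω : sphere (0 : F) 1) : r • (spherePolarPoint e (α, ω) : E) =
      e (WithLp.toLp 2 (r * cos α, (r * sin α) • (ω : F))) := by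
    rw [spherePolarPoint, ← map_smul, ← WithLp.toLp_smul, Prod.smul_mk, smul_smul, smul_eq_mul]
  let g (ω : sphere (0 : F) 1) (p : ℝ × ℝ) : ℝ≥0∞ :=
    ENNReal.ofReal (p.2 ^ (finrank ℝ F - 1)) * f (e (WithLp.toLp 2 (p.1, p.2 • (ω : F))))
  calc ∫⁻ x, f x
      = ∫⁻ x : ℝ, ∫⁻ y : F, f (e (WithLp.toLp 2 (x, y))) := by
        rw [← e.measurePreserving.lintegral_comp hf,
          ← (WithLp.volume_preserving_toLp ℝ F).lintegral_comp (by fun_prop),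
          Measure.volume_eq_prod, lintegral_prod _ (by fun_prop)]
    _ = ∫⁻ x : ℝ, ∫⁻ ω, ∫⁻ ρ in Ioi (0 : ℝ), g ω (x, ρ)
          ∂volume ∂(volume : Measure F).toSphere := by
        refine lintegral_congr fun x ↦ ?_
        exact lintegral_eq_lintegral_toSphere volume
          (f := fun y ↦ f (e (WithLp.toLp 2 (x, y)))) (by fun_prop)
    _ = ∫⁻ ω, ∫⁻ x : ℝ, ∫⁻ ρ in Ioi (0 : ℝ), g ω (x, ρ)
          ∂volume ∂volume ∂(volume : Measure F).toSphere := by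
        refine lintegral_lintegral_swap (Measurable.lintegral_prod_right' (f := fun q :
          (ℝ × sphere (0 : F) 1) × ℝ ↦ g q.1.2 (q.1.1, q.2)) ?_).aemeasurable
        fun_prop
    _ = _ := by
        simp only [hpoint]
        refine lintegral_congr fun ω ↦ ?_
        exact lintegral_halfPlane_eq_lintegral_polar (g := g ω) (by fun_prop)

variable (F) in
/-- The measure `sin α ^ (dim F - 1) dα dω` on `(0, π) × S(F)`, which the polar coordinates
`spherePolarPoint` carry to the surface measure of the unit sphere of `ℝ ⊕ F`. -/
def spherePolarMeasure : Measure (ℝ × sphere (0 : F) 1) :=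
  ((volume.restrict (Ioo 0 π)).withDensity fun α ↦
    ENNReal.ofReal (sin α ^ (finrank ℝ F - 1))).prod (volume : Measure F).toSphere

theorem map_spherePolarPoint_spherePolarMeasure :
    (spherePolarMeasure F).map (spherePolarPoint e) = (volume : Measure E).toSphere := by
  have : Nontrivial E := e.symm.toEquiv.nontrivial
  have hfinrank : finrank ℝ E - 1 = finrank ℝ F - 1 + 1 := by
    rw [← e.toLinearEquiv.finrank_eq, finrank_withLp_real_prod, Nat.add_sub_cancel,
      Nat.sub_add_cancel Module.finrank_pos]
  have hpoint : Measurable (spherePolarPoint e) := (continuous_spherePolarPoint e).measurable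
  refine eq_toSphere_of_lintegral_eq _ fun f hf ↦ ?_
  have hradial : Measurable fun ω : sphere (0 : E) 1 ↦ ∫⁻ r in Ioi (0 : ℝ),
      ENNReal.ofReal (r ^ (finrank ℝ E - 1)) * f (r • (ω : E)) :=
    Measurable.lintegral_prod_right' (f := fun q : sphere (0 : E) 1 × ℝ ↦
      ENNReal.ofReal (q.2 ^ (finrank ℝ E - 1)) * f (q.2 • (q.1 : E))) (by fun_prop)
  rw [lintegral_map hradial hpoint, lintegral_eq_lintegral_smul_spherePolarPoint e hf,
    spherePolarMeasure, lintegral_prod_symm _ (by exact (hradial.comp hpoint).aemeasurable)]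
  refine lintegral_congr fun ω ↦ ?_
  rw [lintegral_withDensity_eq_lintegral_mul _ (by fun_prop)
    (by exact hradial.comp (hpoint.comp measurable_prodMk_right)),
    lintegral_lintegral_swap (by fun_prop)]
  refine setLIntegral_congr_fun measurableSet_Ioo fun α hα ↦ ?_
  have hsin : 0 ≤ sin α ^ (finrank ℝ F - 1) :=
    pow_nonneg (sin_nonneg_of_mem_Icc ⟨hα.1.le, hα.2.le⟩) _
  rw [Pi.mul_apply, ← lintegral_const_mul _ (by fun_prop)]
  refine setLIntegral_congr_fun measurableSet_Ioi fun r (hr : 0 < r) ↦ ?_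
  rw [hfinrank, ← mul_assoc, ← mul_assoc, ← ENNReal.ofReal_mul hr.le, ← ENNReal.ofReal_mul hsin]
  ring_nf

end PolarCoordinates

end SphereMeasure

section ParallelIntegral

open Module (finrank)

theorem contDiff_one_integral_of_hasDerivAt {X V : Type*} [TopologicalSpace X] [CompactSpace X]
    [MeasurableSpace X] [OpensMeasurableSpace X] [NormedAddCommGroup V] [NormedSpace ℝ V]
    [SecondCountableTopologyEither X V] {μ : Measure X} [IsFiniteMeasure μ] {f f' : ℝ → X → V}
    (hf : ∀ t, Continuous (f t)) (hf' : Continuous f'.uncurry)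
    (hderiv : ∀ t x, HasDerivAt (f · x) (f' t x) t) :
    ContDiff ℝ 1 fun t ↦ ∫ x, f t x ∂μ := by
  have hderivInt (t : ℝ) : HasDerivAt (fun t ↦ ∫ x, f t x ∂μ) (∫ x, f' t x ∂μ) t := by
    obtain ⟨C, hC⟩ := ((isCompact_closedBall t 1).prod isCompact_univ).exists_bound_of_continuousOn
      hf'.continuousOn
    exact (hasDerivAt_integral_of_dominated_loc_of_deriv_le (F := f) (F' := f') (bound := fun _ ↦ C)
      (closedBall_mem_nhds t one_pos) (.of_forall fun s ↦ (hf s).aestronglyMeasurable)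
      ((hf t).integrable_of_hasCompactSupport (.of_compactSpace _))
      (hf'.uncurry_left t).aestronglyMeasurable
      (.of_forall fun x s hs ↦ hC (s, x) ⟨hs, trivial⟩) (integrable_const C)
      (.of_forall fun x s _ ↦ hderiv s x)).2
  rw [contDiff_one_iff_deriv]
  refine ⟨fun t ↦ (hderivInt t).differentiableAt, ?_⟩
  rw [show deriv _ = _ from funext fun t ↦ (hderivInt t).deriv]
  simpa using continuous_parametric_integral_of_continuous (μ := μ) hf' isCompact_univ

variable {E F : Type*} [NormedAddCommGroup E] [InnerProductSpace ℝ E]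
  [NormedAddCommGroup F] [InnerProductSpace ℝ F]
  [FiniteDimensional ℝ F] [MeasurableSpace F] [BorelSpace F]
  (e : WithLp 2 (ℝ × F) ≃ₗᵢ[ℝ] E)

/-- The integral of `Φ` over the directions `ω` of the parallel at polar angle `α`, with respect to
the surface measure of the unit sphere of the equatorial hyperplane `F`. -/
def parallelIntegral (Φ : E → ℂ) (α : ℝ) : ℂ :=
  ∫ ω, Φ (spherePolarPoint e (α, ω)) ∂(volume : Measure F).toSphere

variable {e} {Φ : E → ℂ}

theorem parallelIntegral_zero : parallelIntegral e Φ 0 =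
    (volume : Measure F).toSphere.real Set.univ * Φ (e (WithLp.toLp 2 (1, 0))) := by
  simp [parallelIntegral, spherePolarPoint]

theorem contDiff_parallelIntegral (hΦ : ContDiff ℝ 1 Φ) : ContDiff ℝ 1 (parallelIntegral e Φ) := by
  let γ (ω : F) (α : ℝ) : E := e (WithLp.toLp 2 (cos α, sin α • ω))
  let γ' (ω : F) (α : ℝ) : E := e (WithLp.toLp 2 (-sin α, cos α • ω))
  have hγ (ω : F) (α : ℝ) : HasDerivAt (γ ω) (γ' ω α) α := by
    let toE := (WithLp.prodContinuousLinearEquiv 2 ℝ ℝ F).symm.trans e.toContinuousLinearEquiv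
    exact toE.hasFDerivAt.comp_hasDerivAt α
      ((hasDerivAt_cos α).prodMk ((hasDerivAt_sin α).smul_const ω))
  refine contDiff_one_integral_of_hasDerivAt (f := fun α (ω : sphere (0 : F) 1) ↦ Φ (γ ω α))
    (f' := fun α (ω : sphere (0 : F) 1) ↦ fderiv ℝ Φ (γ ω α) (γ' ω α)) (fun α ↦ ?_) ?_
    fun α ω ↦ ?_
  · have := hΦ.continuous
    fun_prop
  · have := hΦ.continuous_fderiv one_ne_zero
    simp only [Function.uncurry_def]
    fun_prop
  · exact ((hΦ.differentiable one_ne_zero _).hasFDerivAt).comp_hasDerivAt α (hγ ω α)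

theorem parallelIntegral_eq_zero {β : ℝ} (hβ : 0 ≤ β)
    (hcap : ∀ q : sphere (0 : E) 1, ⟪(q : E), e (WithLp.toLp 2 (1, 0))⟫ < cos β → Φ q = 0)
    {α : ℝ} (hα : α ∈ Ioc β π) : parallelIntegral e Φ α = 0 := by
  refine integral_eq_zero_of_ae (.of_forall fun ω ↦ hcap _ ?_)
  rw [inner_spherePolarPoint]
  exact cos_lt_cos_of_nonneg_of_le_pi hβ hα.2 hα.1

theorem parallelIntegral_right_eq_zero (hΦ : ContDiff ℝ 1 Φ) {β : ℝ} (hβ : β ∈ Ioo 0 π)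
    (hcap : ∀ q : sphere (0 : E) 1, ⟪(q : E), e (WithLp.toLp 2 (1, 0))⟫ < cos β → Φ q = 0) :
    parallelIntegral e Φ β = 0 := by
  have hlim : Tendsto (parallelIntegral e Φ) (𝓝[>] β) (𝓝 (parallelIntegral e Φ β)) :=
    (contDiff_parallelIntegral hΦ).continuous.continuousWithinAt
  refine tendsto_nhds_unique (hlim.congr' ?_) tendsto_const_nhds
  filter_upwards [Ioc_mem_nhdsGT hβ.2] with α hα using parallelIntegral_eq_zero hβ.1.le hcap hα

variable [FiniteDimensional ℝ E] [MeasurableSpace E] [BorelSpace E] [Nontrivial F]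

theorem integral_toSphere_eq_integral_parallelIntegral (hΦ : Continuous Φ) :
    ∫ q : sphere (0 : E) 1, Φ q ∂(volume : Measure E).toSphere =
      ∫ α in (0 : ℝ)..π, ((sin α ^ (finrank ℝ F - 1) : ℝ) : ℂ) * parallelIntegral e Φ α := by
  have hpoint := (continuous_spherePolarPoint e).measurable
  have hcont : Continuous fun q : sphere (0 : E) 1 ↦ Φ q := by fun_prop
  have hint := hcont.integrable_of_hasCompactSupport (μ := (volume : Measure E).toSphere)
    (.of_compactSpace _)
  rw [← map_spherePolarPoint_spherePolarMeasure e,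
    integrable_map_measure hcont.aestronglyMeasurable hpoint.aemeasurable,
    spherePolarMeasure] at hint
  rw [← map_spherePolarPoint_spherePolarMeasure e,
    integral_map hpoint.aemeasurable hcont.aestronglyMeasurable, spherePolarMeasure,
    integral_prod _ (by exact hint),
    integral_withDensity_eq_integral_toReal_smul (by fun_prop) (by simp),
    intervalIntegral.integral_of_le pi_pos.le, integral_Ioc_eq_integral_Ioo]
  refine setIntegral_congr_fun measurableSet_Ioo fun α hα ↦ ?_
  rw [ENNReal.toReal_ofReal (pow_nonneg (sin_nonneg_of_mem_Icc ⟨hα.1.le, hα.2.le⟩) _),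
    Complex.real_smul]
  rfl

theorem integral_cexp_mul_toSphere_eq (hΦ : Continuous Φ) {β : ℝ} (hβ : β ∈ Ioo 0 π)
    (hcap : ∀ q : sphere (0 : E) 1, ⟪(q : E), e (WithLp.toLp 2 (1, 0))⟫ < cos β → Φ q = 0)
    (N : ℝ) :
    ∫ q : sphere (0 : E) 1,
        Complex.exp (I * ((1 - ⟪(q : E), e (WithLp.toLp 2 (1, 0))⟫ : ℝ) : ℂ) * N) * Φ q
        ∂(volume : Measure E).toSphere =
      ∫ α in (0 : ℝ)..β, Complex.exp (I * ((1 - cos α : ℝ) : ℂ) * N) *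
        (((sin α ^ (finrank ℝ F - 1) : ℝ) : ℂ) * parallelIntegral e Φ α) := by
  have hparallel (α : ℝ) : parallelIntegral e (fun x ↦
      Complex.exp (I * ((1 - ⟪x, e (WithLp.toLp 2 (1, 0))⟫ : ℝ) : ℂ) * N) * Φ x) α =
        Complex.exp (I * ((1 - cos α : ℝ) : ℂ) * N) * parallelIntegral e Φ α := by
    simp only [parallelIntegral, inner_spherePolarPoint, integral_const_mul]
  rw [integral_toSphere_eq_integral_parallelIntegral (e := e) (Φ := fun x ↦
      Complex.exp (I * ((1 - ⟪x, e (WithLp.toLp 2 (1, 0))⟫ : ℝ) : ℂ) * N) * Φ x) (by fun_prop),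
    intervalIntegral.integral_of_le pi_pos.le, intervalIntegral.integral_of_le hβ.1.le]
  simp only [hparallel, mul_left_comm _ (Complex.exp _)]
  refine setIntegral_eq_of_subset_of_forall_sdiff_eq_zero measurableSet_Ioc
    (Set.Ioc_subset_Ioc_right hβ.2.le) fun α hα ↦ ?_
  have hβα : β < α := not_le.1 fun h ↦ hα.2 ⟨hα.1.1, h⟩
  rw [parallelIntegral_eq_zero hβ.1.le hcap ⟨hβα, hα.1.2⟩, mul_zero, mul_zero]

end ParallelIntegral

section StationaryPhase

open Module (finrank)

variable {E : Type*} [NormedAddCommGroup E] [InnerProductSpace ℝ E] [FiniteDimensional ℝ E]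
  [MeasurableSpace E] [BorelSpace E]

theorem toSphere_real_univ_of_finrank_eq_one (h : finrank ℝ E = 1) :
    (volume : Measure E).toSphere.real Set.univ = 2 := by
  have : Nontrivial E := Module.nontrivial_of_finrank_pos (h ▸ one_pos)
  rw [Measure.toSphere_real_apply_univ, measureReal_def,
    InnerProductSpace.volume_ball_of_dim_odd (k := 0) (by simpa)]
  simp [h]

theorem toSphere_real_univ_of_finrank_eq_two (h : finrank ℝ E = 2) :
    (volume : Measure E).toSphere.real Set.univ = 2 * π := by
  have : Nontrivial E := Module.nontrivial_of_finrank_pos (h ▸ two_pos)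
  rw [Measure.toSphere_real_apply_univ, measureReal_def,
    InnerProductSpace.volume_ball_of_dim_even (k := 1) (by simpa)]
  simp [h, pi_nonneg]

theorem toSphere_eq_dirac_add_dirac_neg (h : finrank ℝ E = 1) (κ : sphere (0 : E) 1) :
    (volume : Measure E).toSphere = Measure.dirac κ + Measure.dirac (-κ) := by
  have : Nontrivial E := Module.nontrivial_of_finrank_pos (h ▸ one_pos)
  let e : ℝ ≃ₗᵢ[ℝ] E := (LinearIsometry.toSpanSingleton ℝ E
    (norm_eq_of_mem_sphere κ)).toLinearIsometryEquiv (by rw [Module.finrank_self, h])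
  refine (eq_toSphere_of_lintegral_eq _ fun f hf ↦ ?_).symm
  have hray : ∫⁻ x in (Ioi (0 : ℝ))ᶜ, f (x • (κ : E)) =
      ∫⁻ r in Ioi (0 : ℝ), f (r • (-κ : sphere (0 : E) 1)) := by
    have hneg := (Measure.measurePreserving_neg (volume : Measure ℝ)).setLIntegral_comp_preimage
      (measurableSet_Iio (a := 0)) (f := fun x ↦ f (x • (κ : E))) (by fun_prop)
    rw [Set.compl_Ioi, setLIntegral_congr Iio_ae_eq_Iic.symm, ← hneg]
    simp
  calc ∫⁻ x, f x
      = ∫⁻ x : ℝ, f (x • (κ : E)) := (e.measurePreserving.lintegral_comp hf).symm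
    _ = _ := by
      rw [← lintegral_add_compl _ measurableSet_Ioi, hray, lintegral_add_measure,
        lintegral_dirac, lintegral_dirac]
      simp [h]

variable {κ : sphere (0 : E) 1} {Φ : E → ℂ} {β : ℝ}

theorem integral_cexp_mul_toSphere_of_finrank_eq_one (h : finrank ℝ E = 1) (hβ : β ∈ Ioo 0 π)
    (hcap : ∀ q : sphere (0 : E) 1, ⟪(q : E), κ⟫ < cos β → Φ q = 0) (N : ℝ) :
    ∫ q : sphere (0 : E) 1, Complex.exp (I * ((1 - ⟪(q : E), κ⟫ : ℝ) : ℂ) * N) * Φ q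
      ∂(volume : Measure E).toSphere = Φ κ := by
  have hantipode : Φ (-κ) = 0 := by
    refine hcap (-κ) ?_
    simpa using cos_lt_cos_of_nonneg_of_le_pi hβ.1.le le_rfl hβ.2
  rw [toSphere_eq_dirac_add_dirac_neg h κ, integral_add_measure, integral_dirac, integral_dirac]
  · simp [hantipode]
  · exact integrable_dirac enorm_lt_top
  · exact integrable_dirac enorm_lt_top

theorem tendsto_sqrt_mul_integral_toSphere_of_finrank_eq_two (h : finrank ℝ E = 2)
    (hΦ : ContDiff ℝ 1 Φ) (hβ : β ∈ Ioo 0 π)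
    (hcap : ∀ q : sphere (0 : E) 1, ⟪(q : E), κ⟫ < cos β → Φ q = 0) :
    Tendsto (fun N : ℝ ↦ ((√N : ℝ) : ℂ) * ∫ q : sphere (0 : E) 1,
        Complex.exp (I * ((1 - ⟪(q : E), κ⟫ : ℝ) : ℂ) * N) * Φ q ∂(volume : Measure E).toSphere)
      atTop (𝓝 (2 * fresnelLimit * Φ κ)) := by
  have hF : finrank ℝ (EuclideanSpace ℝ (Fin 1)) = 1 := finrank_euclideanSpace_fin
  obtain ⟨e, he⟩ := exists_linearIsometryEquiv_prod_apply_eq (F := EuclideanSpace ℝ (Fin 1))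
    (by rw [h, hF]) κ
  rw [← he] at hcap ⊢
  have hlim := tendsto_sqrt_mul_integral_cexp_one_sub_cos hβ
    (contDiff_parallelIntegral (e := e) hΦ)
  rw [parallelIntegral_zero, toSphere_real_univ_of_finrank_eq_one hF] at hlim
  simp only [integral_cexp_mul_toSphere_eq hΦ.continuous hβ hcap, hF, tsub_self, pow_zero,
    Complex.ofReal_one, one_mul]
  convert hlim using 2
  push_cast
  ring

theorem tendsto_mul_integral_toSphere_of_finrank_eq_three (h : finrank ℝ E = 3)
    (hΦ : ContDiff ℝ 1 Φ) (hβ : β ∈ Ioo 0 π)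
    (hcap : ∀ q : sphere (0 : E) 1, ⟪(q : E), κ⟫ < cos β → Φ q = 0) :
    Tendsto (fun N : ℝ ↦ (N : ℂ) * ∫ q : sphere (0 : E) 1,
        Complex.exp (I * ((1 - ⟪(q : E), κ⟫ : ℝ) : ℂ) * N) * Φ q ∂(volume : Measure E).toSphere)
      atTop (𝓝 (2 * π * I * Φ κ)) := by
  have hF : finrank ℝ (EuclideanSpace ℝ (Fin 2)) = 2 := finrank_euclideanSpace_fin
  obtain ⟨e, he⟩ := exists_linearIsometryEquiv_prod_apply_eq (F := EuclideanSpace ℝ (Fin 2))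
    (by rw [h, hF]) κ
  rw [← he] at hcap ⊢
  have hlim := tendsto_mul_integral_cexp_one_sub_cos_mul_sin hβ
    (contDiff_parallelIntegral (e := e) hΦ) (parallelIntegral_right_eq_zero hΦ hβ hcap)
  rw [parallelIntegral_zero, toSphere_real_univ_of_finrank_eq_two hF] at hlim
  simp only [integral_cexp_mul_toSphere_eq hΦ.continuous hβ hcap, hF, Nat.add_one_sub_one, pow_one]
  convert hlim using 2
  push_cast
  ring

theorem two_pi_I_cpow_one_half : (2 * (π : ℂ) * I) ^ (1 / 2 : ℂ) = 2 * fresnelLimit := by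
  have hsq : 2 * (π : ℂ) * I = (2 * fresnelLimit) ^ 2 := by
    have hsqrt : ((√π : ℝ) : ℂ) ^ 2 = π := by rw [← Complex.ofReal_pow, sq_sqrt pi_pos.le]
    rw [fresnelLimit]
    push_cast
    linear_combination (-(1 + I) ^ 2) * hsqrt - (π : ℂ) * Complex.I_sq
  have hre : 0 < (2 * fresnelLimit).re := by simp [fresnelLimit, pi_pos]
  have harg := abs_lt.1 (Complex.abs_arg_lt_pi_div_two_iff.2 (.inl hre))
  rw [hsq, show (1 / 2 : ℂ) = ((2 : ℕ) : ℂ)⁻¹ by norm_num,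
    Complex.pow_cpow_nat_inv two_ne_zero (by simpa using harg.1) (by simpa using harg.2.le)]

theorem stationary_phase_sphere_general (hE : finrank ℝ E = 1 ∨ finrank ℝ E = 2 ∨ finrank ℝ E = 3)
    (κ : sphere (0 : E) 1) (Φ : E → ℂ) (hΦ : ContDiff ℝ 1 Φ) {β : ℝ} (hβ : β ∈ Ioo 0 π)
    (hcap : ∀ q : sphere (0 : E) 1, ⟪(q : E), κ⟫ < cos β → Φ q = 0) :
    Tendsto (fun N : ℝ ↦ (2 * (π : ℂ) * I) ^ (-(((finrank ℝ E : ℂ) - 1) / 2)) *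
        ∫ q : sphere (0 : E) 1, ((N ^ (((finrank ℝ E : ℝ) - 1) / 2) : ℝ) : ℂ) *
          Complex.exp (I * ((1 - ⟪(q : E), κ⟫ : ℝ) : ℂ) * N) * Φ q
          ∂(volume : Measure E).toSphere)
      atTop (𝓝 (Φ κ)) := by
  have hcancel (s z : ℂ) : (2 * (π : ℂ) * I) ^ (-s) * ((2 * (π : ℂ) * I) ^ s * z) = z := by
    rw [← mul_assoc, ← Complex.cpow_add _ _ Complex.two_pi_I_ne_zero, neg_add_cancel,
      Complex.cpow_zero, one_mul]
  simp only [mul_assoc _ (Complex.exp _), integral_const_mul]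
  rw [← hcancel ((finrank ℝ E - 1) / 2) (Φ κ)]
  refine Tendsto.const_mul _ ?_
  rcases hE with h | h | h <;> rw [h]
  · simp only [integral_cexp_mul_toSphere_of_finrank_eq_one h hβ hcap]
    simp
  · have hsqrt (N : ℝ) : N ^ (((2 : ℕ) - 1 : ℝ) / 2) = √N := by norm_num [sqrt_eq_rpow]
    have hconst : (2 * (π : ℂ) * I) ^ (((2 : ℕ) - 1 : ℂ) / 2) = 2 * fresnelLimit := by
      rw [← two_pi_I_cpow_one_half]
      norm_num
    simpa only [hsqrt, hconst] using
      tendsto_sqrt_mul_integral_toSphere_of_finrank_eq_two h hΦ hβ hcap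
  · have hself (N : ℝ) : N ^ (((3 : ℕ) - 1 : ℝ) / 2) = N := by norm_num
    have hconst : (2 * (π : ℂ) * I) ^ (((3 : ℕ) - 1 : ℂ) / 2) = 2 * π * I := by norm_num
    simpa only [hself, hconst] using
      tendsto_mul_integral_toSphere_of_finrank_eq_three h hΦ hβ hcap

end StationaryPhase

/-- stationary phase on the sphere. For `d ∈ {1,2,3}`, `κ ∈ S^{d-1}` and
`φ ∈ C¹(S^{d-1};ℝ)` supported in the half-sphere `{q : q·κ ≥ 0}`, the oscillatory integrals
`A^N_φ = (2πi)^{-(d-1)/2} ∫ N^{(d-1)/2} e^{i(1-q·κ)N} φ(q) dS(q)` converge to `φ(κ)`. -/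
theorem stationary_phase_sphere (d : ℕ) (hd : d = 1 ∨ d = 2 ∨ d = 3)
    (κ : sphere (0 : EuclideanSpace ℝ (Fin d)) 1)
    (φ : sphere (0 : EuclideanSpace ℝ (Fin d)) 1 → ℝ)
    (hφC1 : ∃ Φ : EuclideanSpace ℝ (Fin d) → ℝ, ContDiff ℝ 1 Φ ∧
      ∀ q : sphere (0 : EuclideanSpace ℝ (Fin d)) 1, Φ (q : EuclideanSpace ℝ (Fin d)) = φ q)
    (hφsupp : ∀ q : sphere (0 : EuclideanSpace ℝ (Fin d)) 1,
      ⟪(q : EuclideanSpace ℝ (Fin d)), (κ : EuclideanSpace ℝ (Fin d))⟫ < 0 → φ q = 0) :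
    Filter.Tendsto (fun N : ℝ =>
        (2 * (π : ℂ) * Complex.I) ^ (-(((d : ℂ) - 1) / 2)) *
          ∫ q : sphere (0 : EuclideanSpace ℝ (Fin d)) 1,
            ((N ^ (((d : ℝ) - 1) / 2) : ℝ) : ℂ) *
              Complex.exp (Complex.I *
                ((1 - ⟪(q : EuclideanSpace ℝ (Fin d)), (κ : EuclideanSpace ℝ (Fin d))⟫ : ℝ) : ℂ) *
                (N : ℂ)) *
              ((φ q : ℝ) : ℂ)
            ∂(Measure.toSphere (volume : Measure (EuclideanSpace ℝ (Fin d)))))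
      Filter.atTop (𝓝 ((φ κ : ℝ) : ℂ)) := by
  obtain ⟨Φ, hΦ, hΦφ⟩ := hφC1
  have hlim := stationary_phase_sphere_general (by rwa [finrank_euclideanSpace_fin]) κ
    (fun x ↦ (Φ x : ℂ)) (Complex.ofRealCLM.contDiff.comp hΦ)
    ⟨pi_div_two_pos, div_two_lt_of_pos pi_pos⟩ fun q hq ↦ by
      rw [hΦφ, hφsupp q (by rwa [cos_pi_div_two] at hq), Complex.ofReal_zero]
  simpa only [finrank_euclideanSpace_fin, hΦφ] using hlim

end
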